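/- arXiv:2404.09771 — 4 statements merged into one kernel-verified Lean document; each statement's English description precedes it below -/
import Mathlib

section
/- If (G,σ) is an ordered d-planar graph with m edges, then there exists a set X of at most 3(d+1) edges of G and a partition of E(G) ∖ X into two disjoint sets E_1 and E_2 with |E_1| ≤ 2m/3 and |E_2| ≤ 2m/3 such that no edge of E_1 crosses an edge of E_2 with respect to σ. -/
/-!
Write `m` for the number of edges. For an edge `f`, every edge outside `spanSet E f` that crosses an
edge inside it must cross `f` itself (`mem_crossSet_of_crosses_span`). Hence an edge whose span has
between `m / 3 - 1` and `2m / 3` elements is already a separator: delete `f` and the edges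
crossing it.

Otherwise every span is either small (fewer than `m / 3 - 1` edges) or big (more than `2m / 3`
edges). Let `S` be the smallest big span, or all of `E` if there is none; all edges of `S` have small
spans. List the inclusion-maximal edges `f₁, f₂, …` of `S` from left to right. The sets of edges of
`S` ending no later than the right end of `fᵢ` grow from small to `S`, each step adding at
most `fᵢ` and its span, hence fewer than `m / 3` edges. So one of them has between `m / 3` and
`2m / 3` elements (`exists_balanced_leftSet`). An edge of `S` outside it that crosses an edge inside
it crosses `fᵢ`, and an edge outside `S` that crosses it crosses the edge spanning `S`. Thus deleting
at most `2d` edges suffices.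
-/


open Finset

/-- An edge of an ordered graph on vertex set `Fin n` (σ is the identification of
the vertices with positions), written so that the first endpoint precedes the second. -/
abbrev Edge (n : ℕ) := Fin n × Fin n

/-- Two edges cross with respect to the vertex order:
their endpoints interleave strictly. -/
def Crosses {n : ℕ} (e e' : Edge n) : Prop :=
  (e.1 < e'.1 ∧ e'.1 < e.2 ∧ e.2 < e'.2) ∨
  (e'.1 < e.1 ∧ e.1 < e'.2 ∧ e'.2 < e.2)

instance {n : ℕ} (e e' : Edge n) : Decidable (Crosses e e') := by
  unfold Crosses; infer_instance

/-- `cr₁ F`: the number of unordered pairs of edges of `F` that cross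
(each unordered pair appears twice among ordered pairs, whence the division by 2). -/
def cr1 {n : ℕ} (F : Finset (Edge n)) : ℕ :=
  ((F ×ˢ F).filter fun p => Crosses p.1 p.2).card / 2

/-- `cr_q F`: the minimum of `cr1 F₁ + ⋯ + cr1 F_q` over all partitions of `F`
into `q` (possibly empty) parts. -/
noncomputable def crq {n : ℕ} (q : ℕ) (F : Finset (Edge n)) : ℕ :=
  sInf { c | ∃ P : Fin q → Finset (Edge n),
      (∀ i j, i ≠ j → Disjoint (P i) (P j)) ∧
      Finset.univ.biUnion P = F ∧ c = ∑ i, cr1 (P i) }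

/-- `cross(e)`: the set of edges of `E` that cross `e`. -/
def crossSet {n : ℕ} (E : Finset (Edge n)) (e : Edge n) : Finset (Edge n) :=
  E.filter fun e' => Crosses e e'

/-- `span(e)`: the set of edges `e' ≠ e` with `σ(u) ≤ σ(u') ≤ σ(v') ≤ σ(v)`. -/
def spanSet {n : ℕ} (E : Finset (Edge n)) (e : Edge n) : Finset (Edge n) :=
  E.filter fun e' => e' ≠ e ∧ e.1 ≤ e'.1 ∧ e'.1 ≤ e'.2 ∧ e'.2 ≤ e.2

/-- An edge `e` is maximal if it lies in the span of no edge of `E`. -/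
def MaximalEdge {n : ℕ} (E : Finset (Edge n)) (e : Edge n) : Prop :=
  e ∈ E ∧ ∀ e' ∈ E, e ∉ spanSet E e'

/-- `left(w)`: the set of edges `(u,v)` with `σ(v) ≤ σ(w)`. -/
def leftSet {n : ℕ} (E : Finset (Edge n)) (w : Fin n) : Finset (Edge n) :=
  E.filter fun e => e.2 ≤ w

/-- Edge `e` contains edge `e'`. -/
def EContains {n : ℕ} (e e' : Edge n) : Prop := e.1 ≤ e'.1 ∧ e'.2 ≤ e.2

theorem mem_crossSet_of_crosses_span {n : ℕ} {E : Finset (Edge n)} (hE : ∀ e ∈ E, e.1 < e.2)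
    {f h g : Edge n} (hh : h ∈ spanSet E f) (hg : g ∈ E) (hgf : g ∉ spanSet E f)
    (hc : Crosses h g) : g ∈ crossSet E f := by
  have hlt := hE g hg
  simp only [spanSet, mem_filter] at hh hgf
  unfold Crosses at hc
  have hne : g ≠ f := by
    rintro rfl
    omega
  refine mem_filter.2 ⟨hg, ?_⟩
  unfold Crosses
  by_contra hcon
  refine hgf ⟨hg, hne, ?_⟩
  omega

/-- To separate `E` it is enough to give one side `A`, and a set `X` containing every edge outside `A`
that crosses an edge of `A`. -/
theorem separation_of_subset {n : ℕ} {E A X : Finset (Edge n)} (k : ℕ) (hA : A ⊆ E) (hX : X ⊆ E)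
    (hXk : X.card ≤ k) (h1 : 3 * A.card ≤ 2 * E.card) (h2 : 3 * ((E \ A) \ X).card ≤ 2 * E.card)
    (hc : ∀ a ∈ A, ∀ g ∈ E, g ∉ A → Crosses a g → g ∈ X) :
    ∃ X E1 E2 : Finset (Edge n),
      X ⊆ E ∧ X.card ≤ k ∧
      Disjoint E1 E2 ∧ E1 ∪ E2 = E \ X ∧
      3 * E1.card ≤ 2 * E.card ∧ 3 * E2.card ≤ 2 * E.card ∧
      ∀ e1 ∈ E1, ∀ e2 ∈ E2, ¬ Crosses e1 e2 := by
  refine ⟨X, A \ X, (E \ A) \ X, hX, hXk, ?_, ?_, ?_, h2, ?_⟩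
  · rw [Finset.disjoint_left]
    intro a
    simp only [mem_sdiff]
    tauto
  · ext a
    have := @hA a
    simp only [mem_sdiff, mem_union]
    tauto
  · have := card_le_card (sdiff_subset : A \ X ⊆ A)
    omega
  · intro a ha g hg hcr
    simp only [mem_sdiff] at ha hg
    exact hg.2 (hc a ha.1 g hg.1.1 hg.1.2 hcr)

/-- If all edges of `S` have small spans and `S` is big, then some edge `f` of `S`, lying in no edge
of `S` that ends further right, cuts off from the left a set of edges of `S` of balanced size. -/
theorem exists_balanced_leftSet {n : ℕ} {E S : Finset (Edge n)} (hE : ∀ e ∈ E, e.1 < e.2)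
    (hSE : S ⊆ E) (hS : 2 * E.card < 3 * S.card)
    (hsmall : ∀ f ∈ S, 3 * ((spanSet E f).card + 1) < E.card) :
    ∃ f ∈ S, (∀ g ∈ S, f.2 < g.2 → f.1 < g.1) ∧
      E.card ≤ 3 * (leftSet S f.2).card ∧ 3 * (leftSet S f.2).card ≤ 2 * E.card := by
  set M := S.filter fun f => (∀ g ∈ S, f.2 < g.2 → f.1 < g.1) ∧
    E.card ≤ 3 * (leftSet S f.2).card with hM
  have hSne : S.Nonempty := by
    rw [← card_pos]
    omega
  have hMne : M.Nonempty := by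
    obtain ⟨f, hf, hmax⟩ := S.exists_max_image (fun f => f.2) hSne
    refine ⟨f, mem_filter.2 ⟨hf, fun g hg h => absurd (hmax g hg) (not_le.2 h), ?_⟩⟩
    have : leftSet S f.2 = S := filter_true_of_mem hmax
    rw [this]
    omega
  -- The leftmost right end comes first; among equal right ends, the longest edge.
  obtain ⟨f, hfM, hmin⟩ := M.exists_min_image (fun f => toLex (f.2, f.1)) hMne
  obtain ⟨hfS, hfmax, hfbig⟩ := mem_filter.1 hfM
  refine ⟨f, hfS, hfmax, hfbig, ?_⟩
  have hmin' : ∀ g ∈ M, f.2 < g.2 ∨ f.2 = g.2 ∧ f.1 ≤ g.1 := fun g hg => by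
    have := hmin g hg
    rwa [Prod.Lex.toLex_le_toLex] at this
  set D := S.filter fun g => g.2 ≤ f.2 ∧ g.1 < f.1 with hD
  have hsub : leftSet S f.2 ⊆ insert f (spanSet E f) ∪ D := by
    intro g hg
    simp only [leftSet, mem_filter] at hg
    have hlt := hE g (hSE hg.1)
    have hgE := hSE hg.1
    simp only [mem_union, mem_insert, spanSet, mem_filter, hD]
    by_cases hgf : g = f
    · exact Or.inl (Or.inl hgf)
    by_cases h1 : g.1 < f.1
    · exact Or.inr ⟨hg.1, hg.2, h1⟩
    · exact Or.inl (Or.inr ⟨hgE, hgf, not_lt.1 h1, hlt.le, hg.2⟩)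
  have hDsmall : 3 * D.card ≤ E.card := by
    rcases D.eq_empty_or_nonempty with h0 | hne
    · simp [h0]
    -- `g` is the inclusion-maximal edge of `S` preceding `f`.
    obtain ⟨g, hgD, hgmax⟩ := D.exists_max_image (fun g => g.2) hne
    obtain ⟨hgS, hg2, hg1⟩ := mem_filter.1 hgD
    have hgM : ∀ h ∈ S, g.2 < h.2 → g.1 < h.1 := by
      intro h hh hlt
      rcases lt_or_ge f.2 h.2 with h2 | h2
      · exact hg1.trans (hfmax h hh h2)
      · by_contra hcon
        have : h ∈ D := mem_filter.2 ⟨hh, h2, (not_lt.1 hcon).trans_lt hg1⟩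
        exact absurd (hgmax h this) (not_le.2 hlt)
    have hDsub : D ⊆ leftSet S g.2 := fun h hh =>
      mem_filter.2 ⟨(mem_filter.1 hh).1, hgmax h hh⟩
    have hcard := card_le_card hDsub
    by_contra hcon
    have : g ∈ M := mem_filter.2 ⟨hgS, hgM, by omega⟩
    have := hmin' g this
    omega
  have h1 := card_le_card hsub
  have h2 := card_union_le (insert f (spanSet E f)) D
  have h3 := card_insert_le f (spanSet E f)
  have h4 := hsmall f hfS
  omega

/-- The case in which all spans within a big set `S` are small, where `C` contains all edges outside
`S` that cross edges of `S`. -/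
theorem separation_of_small_spans {n : ℕ} {E S C : Finset (Edge n)} (hE : ∀ e ∈ E, e.1 < e.2)
    {d : ℕ} (hplanar : ∀ e ∈ E, (crossSet E e).card ≤ d)
    (hSE : S ⊆ E) (hS : 2 * E.card < 3 * S.card)
    (hsmall : ∀ f ∈ S, 3 * ((spanSet E f).card + 1) < E.card)
    (hCE : C ⊆ E) (hC : C.card ≤ d)
    (hSC : ∀ h ∈ S, ∀ g ∈ E, g ∉ S → Crosses h g → g ∈ C) :
    ∃ X E1 E2 : Finset (Edge n),
      X ⊆ E ∧ X.card ≤ 3 * (d + 1) ∧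
      Disjoint E1 E2 ∧ E1 ∪ E2 = E \ X ∧
      3 * E1.card ≤ 2 * E.card ∧ 3 * E2.card ≤ 2 * E.card ∧
      ∀ e1 ∈ E1, ∀ e2 ∈ E2, ¬ Crosses e1 e2 := by
  obtain ⟨f, hfS, hfmax, hlo, hhi⟩ := exists_balanced_leftSet hE hSE hS hsmall
  have hAE : leftSet S f.2 ⊆ E := (filter_subset _ _).trans hSE
  refine separation_of_subset (A := leftSet S f.2) (X := C ∪ crossSet E f) _ hAE
    (union_subset hCE (filter_subset _ _)) ?_ hhi ?_ ?_
  · have h1 := card_union_le C (crossSet E f)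
    have h2 := hplanar f (hSE hfS)
    omega
  · have h1 := card_le_card (sdiff_subset : (E \ leftSet S f.2) \ (C ∪ crossSet E f) ⊆ _)
    have h2 := card_sdiff_add_card_eq_card hAE
    omega
  · intro h hh g hg hgA hc
    obtain ⟨hhS, hh2⟩ := mem_filter.1 hh
    by_cases hgS : g ∈ S
    · have hg2 : f.2 < g.2 := by
        by_contra hcon
        exact hgA (mem_filter.2 ⟨hgS, not_lt.1 hcon⟩)
      have hg1 := hfmax g hgS hg2
      refine mem_union_right _ (mem_filter.2 ⟨hg, ?_⟩)
      unfold Crosses at *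
      omega
    · exact mem_union_left _ (hSC h hhS g hg hgS hc)

/-- if `(G,σ)` is an ordered `d`-planar graph with `m` edges, then there is
a set `X` of at most `3(d+1)` edges and a partition `E₁ ∪ E₂` of `E(G) ∖ X` with
`|E₁| ≤ 2m/3`, `|E₂| ≤ 2m/3` such that no edge of `E₁` crosses an edge of `E₂`. -/
theorem stmt2 {n : ℕ} (E : Finset (Edge n)) (hE : ∀ e ∈ E, e.1 < e.2)
    (d : ℕ) (hplanar : ∀ e ∈ E, (crossSet E e).card ≤ d) :
    ∃ X E1 E2 : Finset (Edge n),
      X ⊆ E ∧ X.card ≤ 3 * (d + 1) ∧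
      Disjoint E1 E2 ∧ E1 ∪ E2 = E \ X ∧
      3 * E1.card ≤ 2 * E.card ∧ 3 * E2.card ≤ 2 * E.card ∧
      ∀ e1 ∈ E1, ∀ e2 ∈ E2, ¬ Crosses e1 e2 := by
  by_cases hgood : ∃ f ∈ E, E.card ≤ 3 * ((spanSet E f).card + 1) ∧
      3 * (spanSet E f).card ≤ 2 * E.card
  · obtain ⟨f, hf, hlo, hhi⟩ := hgood
    refine separation_of_subset (A := spanSet E f) (X := insert f (crossSet E f)) _
      (filter_subset _ _) (insert_subset hf (filter_subset _ _)) ?_ hhi ?_ ?_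
    · have h1 := card_insert_le f (crossSet E f)
      have h2 := hplanar f hf
      omega
    · -- Deleting `f` makes up for the `+ 1` in the lower bound on its span.
      have hfA : f ∉ spanSet E f := by simp [spanSet]
      have hsub : (E \ spanSet E f) \ insert f (crossSet E f) ⊆ E \ insert f (spanSet E f) := by
        intro g
        simp only [mem_sdiff, mem_insert]
        tauto
      have h1 := card_le_card hsub
      have h2 := card_sdiff_add_card_eq_card
        (insert_subset hf (filter_subset _ _) : insert f (spanSet E f) ⊆ E)
      rw [card_insert_of_notMem hfA] at h2
      omega
    · exact fun h hh g hg hgA hc =>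
        mem_insert_of_mem (mem_crossSet_of_crosses_span hE hh hg hgA hc)
  push Not at hgood
  have hdich : ∀ f ∈ E, 3 * (spanSet E f).card ≤ 2 * E.card →
      3 * ((spanSet E f).card + 1) < E.card := fun f hf h => by
    by_contra hcon
    have := hgood f hf (not_lt.1 hcon)
    omega
  by_cases hbig : ∃ e ∈ E, 2 * E.card < 3 * (spanSet E e).card
  · have hne : (E.filter fun e => 2 * E.card < 3 * (spanSet E e).card).Nonempty := by
      obtain ⟨e, he, h⟩ := hbig
      exact ⟨e, mem_filter.2 ⟨he, h⟩⟩
    obtain ⟨e, he, hmin⟩ := exists_min_image _ (fun e => (spanSet E e).card) hne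
    obtain ⟨heE, hebig⟩ := mem_filter.1 he
    refine separation_of_small_spans hE hplanar (S := spanSet E e) (C := crossSet E e)
      (filter_subset _ _) hebig ?_ (filter_subset _ _) (hplanar e heE)
      (fun h hh g hg hgS hc => mem_crossSet_of_crosses_span hE hh hg hgS hc)
    intro f hf
    have hfE : f ∈ E := (mem_filter.1 hf).1
    have hss : spanSet E f ⊂ spanSet E e := by
      refine (ssubset_iff_of_subset ?_).2 ⟨f, hf, by simp [spanSet]⟩
      intro g hg
      simp only [spanSet, mem_filter] at hf hg ⊢
      have hne : g ≠ e := by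
        rintro rfl
        exact hg.2.1 (Prod.ext (by omega) (by omega))
      refine ⟨hg.1, hne, ?_⟩
      omega
    refine hdich f hfE ?_
    by_contra hcon
    have h1 := hmin f (mem_filter.2 ⟨hfE, not_le.1 hcon⟩)
    have h2 := card_lt_card hss
    omega
  · push Not at hbig
    rcases E.eq_empty_or_nonempty with rfl | hne
    · exact ⟨∅, ∅, ∅, by simp⟩
    · have hpos := card_pos.2 hne
      exact separation_of_small_spans hE hplanar (S := E) (C := ∅) subset_rfl (by omega)
        (fun f hf => hdich f hf (hbig f hf)) (empty_subset _) (by simp)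
        (fun h hh g hg hgS hc => absurd hg hgS)
end

section
/- Let (G,σ) be an ordered graph and let e=(u,v) and e'=(u',v') be maximal edges of (G,σ) with σ(u) < σ(u') such that no maximal edge (u'',v'') of (G,σ) satisfies σ(u) < σ(u'') < σ(u'). Then left(u') ⊆ left(u) ∪ span(e) ∪ cross(e) ∪ {e}; in particular, |left(u')| ≤ |left(u)| + |span(e)| + |cross(e)| + 1. -/
/-! Let `f = (a, b)` be an edge with `b ≤ u'`, and suppose `u < b`. If `f` starts before `u`, then
maximality of `e` forces `b < v`, so `f` crosses `e`. If `f` starts at or after `u` and `b ≤ v`,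
then `f` is `e` or lies in its span. The remaining case `u ≤ a`, `v < b` is impossible: `f` lies
below some maximal edge `g` (`exists_maximalEdge_contains`), which starts before `b ≤ u'`, hence
not strictly between `u` and `u'`, hence at or before `u`; but `g` ends after `v`, so `g` would
strictly contain the maximal edge `e`. The cardinality bound follows from the union bound. -/

open Finset

/-- Every edge is contained in a maximal one, namely a longest edge among those containing it. -/
theorem exists_maximalEdge_contains {n : ℕ} {E : Finset (Edge n)} (hE : ∀ e ∈ E, e.1 < e.2)
    {f : Edge n} (hf : f ∈ E) : ∃ g, MaximalEdge E g ∧ EContains g f := by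
  classical
  obtain ⟨g, hg, hmax⟩ := Finset.exists_max_image
    (E.filter fun g : Edge n => g.1 ≤ f.1 ∧ f.2 ≤ g.2) (fun g => (g.2 : ℕ) - (g.1 : ℕ))
    ⟨f, by simp [hf]⟩
  simp only [Finset.mem_filter] at hg hmax
  refine ⟨g, ⟨hg.1, fun h hh hs => ?_⟩, hg.2⟩
  simp only [spanSet, Finset.mem_filter] at hs
  obtain ⟨-, hne, h1, -, h2⟩ := hs
  have hlen := hmax h ⟨hh, h1.trans hg.2.1, hg.2.2.trans h2⟩
  have hlt := hE g hg.1
  have hlt' := hE h hh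
  apply hne
  ext <;> omega

/-- if `e = (u,v)` and `e' = (u',v')` are maximal edges with `σ(u) < σ(u')`
and no maximal edge starts strictly between `u` and `u'`, then
`left(u') ⊆ left(u) ∪ span(e) ∪ cross(e) ∪ {e}`, and in particular
`|left(u')| ≤ |left(u)| + |span(e)| + |cross(e)| + 1`. -/
theorem stmt4 {n : ℕ} (E : Finset (Edge n)) (hE : ∀ e ∈ E, e.1 < e.2)
    (e e' : Edge n) (hmax : MaximalEdge E e) (hmax' : MaximalEdge E e')
    (hlt : e.1 < e'.1)
    (hbetween : ∀ e'' : Edge n, MaximalEdge E e'' → ¬ (e.1 < e''.1 ∧ e''.1 < e'.1)) :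
    leftSet E e'.1 ⊆ leftSet E e.1 ∪ spanSet E e ∪ crossSet E e ∪ {e} ∧
    (leftSet E e'.1).card ≤
      (leftSet E e.1).card + (spanSet E e).card + (crossSet E e).card + 1 := by
  have hsub : leftSet E e'.1 ⊆ leftSet E e.1 ∪ spanSet E e ∪ crossSet E e ∪ {e} := by
    -- An edge of `E` containing the maximal edge `e` equals `e`.
    have key : ∀ g ∈ E, g.1 ≤ e.1 → e.2 ≤ g.2 → e = g := by
      intro g hg h1 h2
      by_contra hne
      exact hmax.2 g hg (by simp [spanSet, hmax.1, hne, h1, h2, (hE e hmax.1).le])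
    intro f hf
    simp only [leftSet, Finset.mem_filter] at hf
    obtain ⟨hfE, hfu⟩ := hf
    have hfl := hE f hfE
    simp only [leftSet, spanSet, crossSet, Finset.mem_union, Finset.mem_filter,
      Finset.mem_singleton, hfE, true_and]
    by_cases hfe : f = e
    · exact Or.inr hfe
    rcases le_or_gt f.2 e.1 with hb | hb
    · exact Or.inl (Or.inl (Or.inl hb))
    rcases lt_or_ge f.1 e.1 with ha | ha
    · rcases lt_or_ge f.2 e.2 with hv | hv
      · exact Or.inl (Or.inr (Or.inr ⟨ha, hb, hv⟩))
      · exact absurd (key f hfE ha.le hv).symm hfe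
    rcases le_or_gt f.2 e.2 with hv | hv
    · exact Or.inl (Or.inl (Or.inr ⟨hfe, ha, hfl.le, hv⟩))
    exfalso
    obtain ⟨g, hg, hg1, hg2⟩ := exists_maximalEdge_contains hE hfE
    rcases le_or_gt g.1 e.1 with hc | hc
    · have := key g hg.1 hc (hv.le.trans hg2)
      subst this
      exact absurd hv hg2.not_gt
    · exact hbetween g hg ⟨hc, (hg1.trans_lt hfl).trans_le hfu⟩
  refine ⟨hsub, (Finset.card_le_card hsub).trans ?_⟩
  have h1 := Finset.card_union_le (leftSet E e.1 ∪ spanSet E e ∪ crossSet E e) {e}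
  have h2 := Finset.card_union_le (leftSet E e.1 ∪ spanSet E e) (crossSet E e)
  have h3 := Finset.card_union_le (leftSet E e.1) (spanSet E e)
  rw [Finset.card_singleton] at h1
  omega
end

section
/- Let (G,σ) be an ordered graph that is d-planar for an integer d ≥ 1. Let F_d be the set of edges of G that cross exactly d other edges with respect to σ, and let S_d be an inclusion-maximal subset of F_d such that no two edges of S_d cross each other with respect to σ. Then (G − S_d, σ) is (d−1)-planar. -/
/-!
Deleting edges only lowers crossing numbers, so only a remaining edge `e` with exactly `d`
crossings could be a problem. Such an `e` must cross some edge of `S`: otherwise `S ∪ {e}` would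
still be a crossing-free subset of `F_d`, against the maximality of `S`. Deleting that edge of `S`
removes a crossing from `e`, leaving at most `d - 1`.
-/

open Finset

theorem Crosses.symm {n : ℕ} {e e' : Edge n} (h : Crosses e e') : Crosses e' e :=
  Or.symm h

theorem not_crosses_self {n : ℕ} (e : Edge n) : ¬ Crosses e e := by
  simp [Crosses]

/-- let `(G,σ)` be `d`-planar with `d ≥ 1`, let `F_d` be the set of edges
crossing exactly `d` other edges, and let `S_d ⊆ F_d` be inclusion-maximal with no two
of its edges crossing. Then `(G − S_d, σ)` is `(d−1)`-planar. -/
theorem stmt8 {n : ℕ} (E : Finset (Edge n)) (hE : ∀ e ∈ E, e.1 < e.2)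
    (d : ℕ) (hd : 1 ≤ d)
    (hplanar : ∀ e ∈ E, (crossSet E e).card ≤ d)
    (S : Finset (Edge n))
    (hS : S ⊆ E.filter fun e => (crossSet E e).card = d)
    (hnc : ∀ e ∈ S, ∀ e' ∈ S, ¬ Crosses e e')
    (hmaximal : ∀ S' : Finset (Edge n), S ⊆ S' →
      S' ⊆ E.filter (fun e => (crossSet E e).card = d) →
      (∀ e ∈ S', ∀ e' ∈ S', ¬ Crosses e e') → S' = S) :
    ∀ e ∈ E \ S, (crossSet (E \ S) e).card ≤ d - 1 := by
  intro e he
  obtain ⟨heE, heS⟩ := mem_sdiff.1 he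
  have hsub : crossSet (E \ S) e ⊆ crossSet E e := filter_subset_filter _ sdiff_subset
  by_cases hcard : (crossSet E e).card = d
  · obtain ⟨s, hsS, hs⟩ : ∃ s ∈ S, Crosses e s := by
      by_contra! hno
      have hins : insert e S = S := by
        refine hmaximal _ (subset_insert e S)
          (insert_subset (mem_filter.2 ⟨heE, hcard⟩) hS) ?_
        intro a ha b hb
        rcases mem_insert.1 ha with rfl | haS <;> rcases mem_insert.1 hb with rfl | hbS
        · exact not_crosses_self _
        · exact hno b hbS
        · exact fun h => hno a haS h.symm
        · exact hnc a haS b hbS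
      exact heS (hins ▸ mem_insert_self e S)
    have hlt : (crossSet (E \ S) e).card < (crossSet E e).card := by
      refine card_lt_card ((ssubset_iff_of_subset hsub).2
        ⟨s, mem_filter.2 ⟨(mem_filter.1 (hS hsS)).1, hs⟩, fun h => ?_⟩)
      exact (mem_sdiff.1 (mem_filter.1 h).1).2 hsS
    omega
  · have h₁ := card_le_card hsub
    have h₂ := hplanar e heE
    omega
end

section
/- Let G = (A ∪ B, E) be a bipartite graph with all edges between A and B and σ_A a bijection A → {1,…,|A|}. For every nonempty X ⊆ B: C[X] = min over y ∈ X of ( C[X ∖ {y}] + Σ_{x ∈ X ∖ {y}} c_{x,y} ), where C[∅] = 0. -/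
/-!
The recursion conditions on the last vertex `y` of an ordering of `X`. If every other vertex of
`X` precedes `y`, then the crossings split into those among the edges at `X ∖ {y}` and those
between an edge at some `x ∈ X ∖ {y}` and an edge at `y`; the latter number `∑ c_{x,y}` whatever
the order of `X ∖ {y}` (`crossings_eq_of_last`). Orderings of `X` with last vertex `y` correspond
to orderings of `X ∖ {y}` by restriction (`IsRanking.erase`) and by appending `y`
(`IsRanking.append`), so minimising over the orderings of `X` amounts to minimising over `y` and
then over the orderings of `X ∖ {y}`.
-/

open Finset

variable {A B : Type*}

/-- `c_{x,y}`: the number of pairs `(a,a')` with `(a,x) ∈ E`, `(a',y) ∈ E` and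
`σ_A(a') < σ_A(a)`, i.e. the number of crossings between the edges at `x` and the
edges at `y` when `x` is placed before `y`. -/
def cxy [Fintype A] [DecidableEq A] [DecidableEq B]
    (σA : A ≃ Fin (Fintype.card A)) (E : Finset (A × B)) (x y : B) : ℕ :=
  ((Finset.univ ×ˢ Finset.univ : Finset (A × A)).filter
    fun p => (p.1, x) ∈ E ∧ (p.2, y) ∈ E ∧ σA p.2 < σA p.1).card

/-- `C[X]`: the minimum, over all bijections `τ` of `X` onto `{1,…,|X|}`, of the number
of unordered pairs of crossing edges among the edges of `E` with an endpoint in `X`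
(each crossing pair is counted once, oriented by `τ`). -/
noncomputable def CC [Fintype A] [DecidableEq A] [DecidableEq B]
    (σA : A ≃ Fin (Fintype.card A)) (E : Finset (A × B)) (X : Finset B) : ℕ :=
  sInf { c : ℕ | ∃ τ : B → ℕ, Set.InjOn τ ↑X ∧ τ '' ↑X = Set.Icc 1 X.card ∧
    c = ((E ×ˢ E).filter fun p =>
      p.1.2 ∈ X ∧ p.2.2 ∈ X ∧ τ p.1.2 < τ p.2.2 ∧ σA p.2.1 < σA p.1.1).card }

/-- `τ` restricts to a bijection of `X` onto `{1,…,|X|}`; its values off `X` are arbitrary. -/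
def IsRanking (X : Finset B) (τ : B → ℕ) : Prop :=
  Set.InjOn τ ↑X ∧ τ '' ↑X = Set.Icc 1 X.card

/-- The number of crossings among the edges with an endpoint in `X` when `B` is ordered by `τ`.
The first entry of each counted pair is the edge whose endpoint in `B` comes first. -/
def crossings [Fintype A] [DecidableEq A] [DecidableEq B]
    (σA : A ≃ Fin (Fintype.card A)) (E : Finset (A × B)) (X : Finset B) (τ : B → ℕ) : ℕ :=
  ((E ×ˢ E).filter fun p =>
    p.1.2 ∈ X ∧ p.2.2 ∈ X ∧ τ p.1.2 < τ p.2.2 ∧ σA p.2.1 < σA p.1.1).card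

section

variable [Fintype A] [DecidableEq A] [DecidableEq B]
  (σA : A ≃ Fin (Fintype.card A)) (E : Finset (A × B)) {X : Finset B} {τ : B → ℕ} {y : B}

lemma crossings_congr {τ' : B → ℕ} (h : ∀ x ∈ X, τ x = τ' x) :
    crossings σA E X τ = crossings σA E X τ' := by
  unfold crossings
  congr 1
  ext p
  simp only [mem_filter]
  constructor
  · rintro ⟨h0, h1, h2, h3, h4⟩
    exact ⟨h0, h1, h2, by rwa [← h _ h1, ← h _ h2], h4⟩
  · rintro ⟨h0, h1, h2, h3, h4⟩
    exact ⟨h0, h1, h2, by rwa [h _ h1, h _ h2], h4⟩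

/-- `c_{x,y}` as a count of pairs of edges rather than of pairs of their endpoints in `A`. -/
lemma cxy_eq_card_edges (x y : B) :
    cxy σA E x y =
      ((E ×ˢ E).filter fun p => p.1.2 = x ∧ p.2.2 = y ∧ σA p.2.1 < σA p.1.1).card := by
  unfold cxy
  refine Finset.card_bij' (fun p _ => ((p.1, x), (p.2, y))) (fun p _ => (p.1.1, p.2.1))
    ?_ ?_ ?_ ?_
  · rintro ⟨a, a'⟩ h
    simpa [and_assoc] using h
  · rintro ⟨⟨a, b⟩, ⟨a', b'⟩⟩ h
    simp only [mem_filter, mem_product] at h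
    obtain ⟨⟨h1, h2⟩, rfl, rfl, h3⟩ := h
    simp [h1, h2, h3]
  · intro p _
    rfl
  · rintro ⟨⟨a, b⟩, ⟨a', b'⟩⟩ h
    simp only [mem_filter, mem_product] at h
    obtain ⟨-, rfl, rfl, -⟩ := h
    rfl

/-- If `y` comes last in `X`, its edges contribute `∑ c_{x,y}` crossings. -/
lemma crossings_eq_of_last (hy : y ∈ X) (hlast : ∀ x ∈ X.erase y, τ x < τ y) :
    crossings σA E X τ =
      crossings σA E (X.erase y) τ + ∑ x ∈ X.erase y, cxy σA E x y := by
  have hcross : ∑ x ∈ X.erase y, cxy σA E x y =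
      ((E ×ˢ E).filter fun p =>
        p.1.2 ∈ X.erase y ∧ p.2.2 = y ∧ σA p.2.1 < σA p.1.1).card := by
    rw [Finset.card_eq_sum_card_fiberwise (f := fun p => p.1.2) (t := X.erase y)]
    · refine Finset.sum_congr rfl fun x hx => ?_
      rw [cxy_eq_card_edges, Finset.filter_filter]
      congr 1
      ext p
      simp only [mem_filter]
      constructor
      · rintro ⟨h0, rfl, h2, h3⟩
        exact ⟨h0, ⟨hx, h2, h3⟩, rfl⟩
      · rintro ⟨h0, ⟨-, h2, h3⟩, h4⟩
        exact ⟨h0, h4, h2, h3⟩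
    · intro p hp
      exact (Finset.mem_filter.1 hp).2.1
  rw [hcross]
  unfold crossings
  rw [← Finset.card_union_of_disjoint]
  · congr 1
    ext p
    simp only [mem_filter, mem_union]
    constructor
    · rintro ⟨h0, h1, h2, h3, h4⟩
      -- the endpoint that comes first cannot be `y`
      have h5 : p.1.2 ≠ y := by
        intro h5
        by_cases h6 : p.2.2 = y
        · rw [h5, h6] at h3
          exact lt_irrefl _ h3
        · have := hlast _ (mem_erase.2 ⟨h6, h2⟩)
          rw [h5] at h3
          exact lt_asymm h3 this
      by_cases h6 : p.2.2 = y
      · exact Or.inr ⟨h0, mem_erase.2 ⟨h5, h1⟩, h6, h4⟩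
      · exact Or.inl ⟨h0, mem_erase.2 ⟨h5, h1⟩, mem_erase.2 ⟨h6, h2⟩, h3, h4⟩
    · rintro (⟨h0, h1, h2, h3, h4⟩ | ⟨h0, h1, h2, h4⟩)
      · exact ⟨h0, mem_of_mem_erase h1, mem_of_mem_erase h2, h3, h4⟩
      · exact ⟨h0, mem_of_mem_erase h1, h2 ▸ hy, by rw [h2]; exact hlast _ h1, h4⟩
  · rw [Finset.disjoint_left]
    intro p hp hp'
    exact (mem_erase.1 (mem_filter.1 hp).2.2.1).1 (mem_filter.1 hp').2.2.1

end

section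

variable [DecidableEq B] {X : Finset B} {τ : B → ℕ} {y : B}

lemma IsRanking.lt_last (h : IsRanking X τ) (hy : y ∈ X) (hτ : τ y = X.card) :
    ∀ x ∈ X.erase y, τ x < τ y := by
  intro x hx
  obtain ⟨hne, hxX⟩ := mem_erase.1 hx
  have h1 : τ x ∈ Set.Icc 1 X.card := h.2 ▸ Set.mem_image_of_mem τ (mem_coe.2 hxX)
  have h2 : τ x ≠ τ y := fun e => hne (h.1 (mem_coe.2 hxX) (mem_coe.2 hy) e)
  exact lt_of_le_of_ne (hτ ▸ h1.2) h2

lemma IsRanking.erase (h : IsRanking X τ) (hy : y ∈ X) (hτ : τ y = X.card) :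
    IsRanking (X.erase y) τ := by
  refine ⟨h.1.mono (by simp), ?_⟩
  have hlast := h.lt_last hy hτ
  have hcard := card_erase_add_one hy
  ext n
  constructor
  · rintro ⟨x, hx, rfl⟩
    have h1 : τ x ∈ Set.Icc 1 X.card :=
      h.2 ▸ Set.mem_image_of_mem τ (mem_coe.2 (mem_of_mem_erase (mem_coe.1 hx)))
    have h2 := hlast x hx
    exact ⟨h1.1, by omega⟩
  · rintro ⟨h1, h2⟩
    have h3 : n ∈ τ '' ↑X := by
      rw [h.2]
      exact ⟨h1, by omega⟩
    obtain ⟨x, hx, rfl⟩ := h3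
    refine ⟨x, mem_coe.2 (mem_erase.2 ⟨?_, hx⟩), rfl⟩
    rintro rfl
    omega

lemma IsRanking.append (h : IsRanking (X.erase y) τ) (hy : y ∈ X) :
    IsRanking X (Function.update τ y X.card) := by
  have hcard := card_erase_add_one hy
  have hmem : ∀ x ∈ X, x ≠ y → 1 ≤ τ x ∧ τ x ≤ (X.erase y).card := by
    intro x hx hne
    have : τ x ∈ Set.Icc 1 (X.erase y).card :=
      h.2 ▸ Set.mem_image_of_mem τ (mem_coe.2 (mem_erase.2 ⟨hne, hx⟩))
    exact this
  constructor
  · intro a ha b hb hab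
    by_cases h1 : a = y <;> by_cases h2 : b = y
    · rw [h1, h2]
    · have := hmem b hb h2
      simp only [h1, Function.update_self, Function.update_of_ne h2] at hab
      omega
    · have := hmem a ha h1
      simp only [h2, Function.update_self, Function.update_of_ne h1] at hab
      omega
    · rw [Function.update_of_ne h1, Function.update_of_ne h2] at hab
      exact h.1 (mem_coe.2 (mem_erase.2 ⟨h1, ha⟩)) (mem_coe.2 (mem_erase.2 ⟨h2, hb⟩)) hab
  · ext n
    constructor
    · rintro ⟨x, hx, rfl⟩
      by_cases h1 : x = y
      · rw [h1, Function.update_self]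
        exact ⟨by omega, le_rfl⟩
      · have := hmem x hx h1
        rw [Function.update_of_ne h1]
        exact ⟨this.1, by omega⟩
    · rintro ⟨h1, h2⟩
      by_cases h3 : n = X.card
      · exact ⟨y, hy, by rw [Function.update_self, h3]⟩
      · have h4 : n ∈ τ '' ↑(X.erase y) := by
          rw [h.2]
          exact ⟨h1, by omega⟩
        obtain ⟨x, hx, rfl⟩ := h4
        obtain ⟨hne, hxX⟩ := mem_erase.1 (mem_coe.1 hx)
        exact ⟨x, hxX, Function.update_of_ne hne _ _⟩

lemma exists_isRanking (X : Finset B) : ∃ τ, IsRanking X τ := by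
  induction X using Finset.induction_on with
  | empty => exact ⟨fun _ => 0, by simp [IsRanking]⟩
  | insert y X hy ih =>
    obtain ⟨τ, hτ⟩ := ih
    rw [← erase_insert hy] at hτ
    exact ⟨_, hτ.append (mem_insert_self y X)⟩

end

section

variable [Fintype A] [DecidableEq A] [DecidableEq B]
  (σA : A ≃ Fin (Fintype.card A)) (E : Finset (A × B))

lemma CC_le_crossings {X : Finset B} {τ : B → ℕ} (h : IsRanking X τ) :
    CC σA E X ≤ crossings σA E X τ :=
  Nat.sInf_le ⟨τ, h.1, h.2, rfl⟩

lemma exists_CC_eq_crossings (X : Finset B) :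
    ∃ τ, IsRanking X τ ∧ CC σA E X = crossings σA E X τ := by
  -- the set of crossing numbers is nonempty, so that its `sInf` is attained
  obtain ⟨τ₀, h₀⟩ := exists_isRanking X
  obtain ⟨τ, h1, h2, h3⟩ := Nat.sInf_mem
    (s := { c : ℕ | ∃ τ : B → ℕ, Set.InjOn τ ↑X ∧ τ '' ↑X = Set.Icc 1 X.card ∧
      c = crossings σA E X τ }) ⟨_, τ₀, h₀.1, h₀.2, rfl⟩
  exact ⟨τ, ⟨h1, h2⟩, h3⟩

end

/-- `C[∅] = 0`, and for every nonempty `X ⊆ B`,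
`C[X] = min_{y ∈ X} ( C[X ∖ {y}] + Σ_{x ∈ X ∖ {y}} c_{x,y} )`. -/
theorem stmt16 [Fintype A] [Fintype B] [DecidableEq A] [DecidableEq B]
    (σA : A ≃ Fin (Fintype.card A)) (E : Finset (A × B)) :
    CC σA E (∅ : Finset B) = 0 ∧
    ∀ X : Finset B, ∀ hX : X.Nonempty,
      CC σA E X =
        X.inf' hX (fun y => CC σA E (X.erase y) + ∑ x ∈ X.erase y, cxy σA E x y) := by
  refine ⟨?_, fun X hX => le_antisymm ?_ ?_⟩
  · obtain ⟨τ, -, h⟩ := exists_CC_eq_crossings σA E (∅ : Finset B)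
    rw [h]
    simp [crossings]
  · refine Finset.le_inf' hX _ fun y hy => ?_
    obtain ⟨τ, hτ, h⟩ := exists_CC_eq_crossings σA E (X.erase y)
    have hr := hτ.append hy
    refine (CC_le_crossings σA E hr).trans (le_of_eq ?_)
    rw [crossings_eq_of_last σA E hy (hr.lt_last hy (Function.update_self ..)), h]
    congr 1
    exact crossings_congr σA E fun x hx => Function.update_of_ne (mem_erase.1 hx).1 _ _
  · obtain ⟨τ, hτ, h⟩ := exists_CC_eq_crossings σA E X
    have hmem : X.card ∈ τ '' ↑X := by
      rw [hτ.2]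
      exact ⟨hX.card_pos, le_rfl⟩
    obtain ⟨y, hy, hτy⟩ := hmem
    refine (Finset.inf'_le _ (mem_coe.1 hy)).trans ?_
    rw [h, crossings_eq_of_last σA E hy (hτ.lt_last hy hτy)]
    exact Nat.add_le_add_right (CC_le_crossings σA E (hτ.erase hy hτy)) _
end
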